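/- arXiv:2312.17440 — 2 statements merged into one kernel-verified Lean document; each statement's English description precedes it below -/
import Mathlib

section
/- Let E ∈ ℝ^{N×N} be a symmetric positive definite matrix, e ∈ ℝ^N, λ ∈ ℝ^N and μ ∈ ℝ. Then the ellipsoid 𝓔(E, e) is contained in the closed half-space H⁻(λ, μ) if and only if sqrt(λᵀ E⁻¹ λ) + λᵀ e ≤ μ. -/
open Matrix

/-!
A half-space `H⁻(λ, μ)` contains `𝓔(E, e)` iff `μ` bounds the maximum of `λᵀ s` over `𝓔(E, e)`.
In terms of the bilinear form `B` of `E` and `w = E⁻¹ λ`, the functional `λᵀ` is `B w` and the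
ellipsoid is a ball of the seminorm of `B`. The maximum of `B w` on the unit ball is `√(B w w)`:
Cauchy-Schwarz bounds it, and the normalisation of `w` attains it.
-/

section BilinForm

variable {V : Type*} [AddCommGroup V] [Module ℝ V]

/-- The ellipsoid with centre `e` cut out by a bilinear form `B`, so that `𝓔(E, e)` is the case
`B = E.toBilin'`. As `B` need not be definite, it includes the degenerate (cylindrical) case. -/
def ellipsoid (B : LinearMap.BilinForm ℝ V) (e : V) : Set V :=
  {s | B (s - e) (s - e) ≤ 1}

variable {B : LinearMap.BilinForm ℝ V}

theorem apply_sub_le_sqrt_of_mem_ellipsoid (hB : B.IsPosSemidef) (w : V) {e s : V}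
    (hs : s ∈ ellipsoid B e) : B w (s - e) ≤ √(B w w) := by
  apply Real.le_sqrt_of_sq_le
  calc B w (s - e) ^ 2
    _ ≤ B w w * B (s - e) (s - e) :=
      B.apply_sq_le_of_symm hB.nonneg (LinearMap.BilinForm.isSymm_iff.mp hB.isSymm) w (s - e)
    _ ≤ B w w := mul_le_of_le_one_right (hB.nonneg w) hs

-- If `B w w ≤ 0`, this point is the centre `e`, because then `√(B w w) = 0` and `0⁻¹ = 0`.
theorem add_inv_sqrt_smul_mem_ellipsoid (B : LinearMap.BilinForm ℝ V) (w e : V) :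
    e + (√(B w w))⁻¹ • w ∈ ellipsoid B e := by
  rw [ellipsoid, Set.mem_ofPred_eq, add_sub_cancel_left]
  calc B ((√(B w w))⁻¹ • w) ((√(B w w))⁻¹ • w)
    _ = (√(B w w))⁻¹ * (B w w / √(B w w)) := by
      simp only [map_smul, LinearMap.smul_apply, smul_eq_mul, inv_mul_eq_div]
    _ = (√(B w w))⁻¹ * √(B w w) := by rw [Real.div_sqrt]
    _ ≤ 1 := inv_mul_le_one

theorem isGreatest_image_ellipsoid (hB : B.IsPosSemidef) (w e : V) :
    IsGreatest (B w '' ellipsoid B e) (√(B w w) + B w e) := by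
  constructor
  · refine ⟨e + (√(B w w))⁻¹ • w, add_inv_sqrt_smul_mem_ellipsoid B w e, ?_⟩
    rw [map_add, map_smul, smul_eq_mul, inv_mul_eq_div, Real.div_sqrt, add_comm]
  · rintro _ ⟨s, hs, rfl⟩
    rw [← sub_le_iff_le_add, ← map_sub]
    exact apply_sub_le_sqrt_of_mem_ellipsoid hB w hs

theorem ellipsoid_subset_halfSpace_iff (hB : B.IsPosSemidef) (w e : V) (μ : ℝ) :
    ellipsoid B e ⊆ {s | B w s ≤ μ} ↔ √(B w w) + B w e ≤ μ := by
  rw [isLUB_le_iff (isGreatest_image_ellipsoid hB w e).isLUB, mem_upperBounds,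
    Set.forall_mem_image]
  rfl

end BilinForm

section Matrix

variable {n : Type*} [Fintype n]

theorem isPosSemidef_toBilin'_iff [DecidableEq n] {R : Type*} [CommRing R] [StarRing R]
    [TrivialStar R] [PartialOrder R] {A : Matrix n n R} :
    A.toBilin'.IsPosSemidef ↔ A.PosSemidef := by
  simp only [LinearMap.BilinForm.isPosSemidef_def, isSymm_toBilin'_iff_isSymm,
    LinearMap.BilinForm.isNonneg_def, toBilin'_apply', posSemidef_iff_dotProduct_mulVec,
    isHermitian_iff_isSymm, star_trivial]

theorem toBilin'_apply_eq_mulVec_dotProduct [DecidableEq n] {R : Type*} [CommRing R]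
    {A : Matrix n n R} (hA : A.IsSymm) (x y : n → R) : A.toBilin' x y = A *ᵥ x ⬝ᵥ y := by
  rw [toBilin'_apply', dotProduct_mulVec, ← mulVec_transpose, hA.eq]

theorem stmt_2_general {E : Matrix n n ℝ} (hE : E.PosSemidef) {w lam : n → ℝ}
    (hw : E *ᵥ w = lam) (e : n → ℝ) (μ : ℝ) :
    {s : n → ℝ | (s - e) ⬝ᵥ E *ᵥ (s - e) ≤ 1} ⊆ {s : n → ℝ | lam ⬝ᵥ s ≤ μ} ↔
      √(lam ⬝ᵥ w) + lam ⬝ᵥ e ≤ μ := by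
  classical
  have apply_w (s : n → ℝ) : E.toBilin' w s = lam ⬝ᵥ s := by
    rw [toBilin'_apply_eq_mulVec_dotProduct (isHermitian_iff_isSymm.mp hE.isHermitian), hw]
  simpa only [ellipsoid, apply_w, toBilin'_apply'] using
    ellipsoid_subset_halfSpace_iff (isPosSemidef_toBilin'_iff.mpr hE) w e μ

end Matrix

/-- An ellipsoid `𝓔(E, e)` is contained in the closed half-space `H⁻(λ, μ)` iff
`sqrt (λᵀ E⁻¹ λ) + λᵀ e ≤ μ`. -/
theorem stmt_2 (N : ℕ) (E : Matrix (Fin N) (Fin N) ℝ) (hE : E.PosDef)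
    (e lam : Fin N → ℝ) (μ : ℝ) :
    {s : Fin N → ℝ | (s - e) ⬝ᵥ E *ᵥ (s - e) ≤ 1} ⊆ {s : Fin N → ℝ | lam ⬝ᵥ s ≤ μ} ↔
      Real.sqrt (lam ⬝ᵥ E⁻¹ *ᵥ lam) + lam ⬝ᵥ e ≤ μ := by
  have mulVec_inv_mulVec : E *ᵥ (E⁻¹ *ᵥ lam) = lam := by
    rw [mulVec_mulVec, mul_nonsing_inv _ hE.det_pos.ne'.isUnit, one_mulVec]
  exact stmt_2_general hE.posSemidef mulVec_inv_mulVec e μ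
end

section
/- (S-procedure / S-lemma) Let F1, F2 ∈ ℝ^{N×N} be symmetric matrices, g1, g2 ∈ ℝ^N, and h1, h2 ∈ ℝ. Suppose there exists x̄ ∈ ℝ^N with x̄ᵀ F1 x̄ + 2 g1ᵀ x̄ + h1 < 0. Then the implication (for all x ∈ ℝ^N, xᵀ F1 x + 2 g1ᵀ x + h1 ≤ 0 implies xᵀ F2 x + 2 g2ᵀ x + h2 ≤ 0) holds if and only if there exists λ ≥ 0 such that the (N+1)×(N+1) block matrix λ·[[F1, g1], [g1ᵀ, h1]] − [[F2, g2], [g2ᵀ, h2]] is positive semidefinite. -/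
open Matrix

/-- The `(N+1) × (N+1)` symmetric block matrix `[[F, g], [gᵀ, h]]`. -/
def quadBlock (N : ℕ) (F : Matrix (Fin N) (Fin N) ℝ) (g : Fin N → ℝ) (h : ℝ) :
    Matrix (Fin N ⊕ Unit) (Fin N ⊕ Unit) ℝ :=
  Matrix.fromBlocks F (Matrix.of fun i _ => g i) (Matrix.of fun _ j => g j)
    (Matrix.of fun _ _ => h)

/-!
Let `Q₁`, `Q₂` be quadratic forms such that `Q₁ z ≤ 0` implies `Q₂ z ≤ 0`. If `Q₁ u < 0 < Q₁ v`,
then `Q₁` vanishes at two points of the line `u + t • v`, with parameters `r < 0 < s`, so `Q₂`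
is nonpositive there. Weighting these two inequalities by `s` and `-r` cancels the linear term
and leaves `Q₂ v / Q₁ v ≤ Q₂ u / Q₁ u`. Any nonnegative number separating the two families of
ratios is a multiplier. Inhomogeneous quadratic functions reduce to this case by homogenization:
at the points at infinity, the implication is obtained as a limit along the direction of a
strictly feasible point.
-/

open Filter Topology QuadraticMap

theorem exists_neg_root_pos_root {a c : ℝ} (ha : 0 < a) (hc : c < 0) (b : ℝ) :
    ∃ r < 0, ∃ s > 0,
      a * r ^ 2 + b * r + c = 0 ∧ a * s ^ 2 + b * s + c = 0 ∧ a * (r * s) = c := by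
  have hdiscrim : 0 ≤ discrim a b c := by
    have := mul_neg_of_pos_of_neg ha hc
    unfold discrim
    nlinarith [sq_nonneg b]
  obtain ⟨x, hx⟩ := exists_quadratic_eq_zero ha.ne' ⟨_, (Real.mul_self_sqrt hdiscrim).symm⟩
  have hx0 : x ≠ 0 := by
    rintro rfl
    simp [hc.ne] at hx
  -- Vieta: the other root is `c / (a * x)`.
  obtain ⟨y, hxy⟩ : ∃ y, a * (x * y) = c := ⟨c / (a * x), by field_simp⟩
  have hy : a * y ^ 2 + b * y + c = 0 := by
    apply mul_left_cancel₀ hx0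
    linear_combination y * hx + (y - x) * hxy
  have hx : a * x ^ 2 + b * x + c = 0 := by linear_combination hx
  have hneg : x * y < 0 := by
    rw [← hxy] at hc
    exact neg_of_mul_neg_right hc ha.le
  rcases mul_neg_iff.mp hneg with ⟨hx_pos, hy_neg⟩ | ⟨hx_neg, hy_pos⟩
  · exact ⟨y, hy_neg, x, hx_pos, hy, hx, by rw [mul_comm y, hxy]⟩
  · exact ⟨x, hx_neg, y, hy_pos, hx, hy, hxy⟩

theorem quadraticForm_map_add_smul {R V : Type*} [CommRing R] [AddCommGroup V] [Module R V]
    (Q : QuadraticForm R V) (u v : V) (t : R) :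
    Q (u + t • v) = Q v * t ^ 2 + polar Q u v * t + Q u := by
  rw [QuadraticMap.map_add Q, QuadraticMap.map_smul, polar_smul_right, smul_eq_mul, smul_eq_mul]
  ring

theorem toQuadraticForm'_apply {n R : Type*} [Fintype n] [DecidableEq n] [CommRing R]
    (F : Matrix n n R) (x : n → R) : F.toQuadraticForm' x = x ⬝ᵥ F *ᵥ x :=
  toLinearMap₂'_apply' F x x

section Homogenization

variable {R V : Type*} [CommSemiring R] [AddCommMonoid V] [Module R V]

/-- The quadratic form `(x, t) ↦ Q x + 2 t l x + h t²` on `V × R`, whose restriction to the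
hyperplane `t = 1` is the inhomogeneous quadratic function `Q + 2 l + h`. -/
def quadraticHomogenization (Q : QuadraticForm R V) (l : V →ₗ[R] R) (h : R) :
    QuadraticForm R (V × R) :=
  Q.comp (LinearMap.fst R V R)
    + (2 : R) • linMulLin (l ∘ₗ LinearMap.fst R V R) (LinearMap.snd R V R)
    + h • sq.comp (LinearMap.snd R V R)

theorem quadraticHomogenization_apply (Q : QuadraticForm R V) (l : V →ₗ[R] R) (h : R)
    (x : V) (t : R) : quadraticHomogenization Q l h (x, t) = Q x + 2 * (l x * t) + h * (t * t) := by
  simp [quadraticHomogenization]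

theorem quadraticHomogenization_apply_one (Q : QuadraticForm R V) (l : V →ₗ[R] R) (h : R) (x : V) :
    quadraticHomogenization Q l h (x, 1) = Q x + 2 * l x + h := by
  simp only [quadraticHomogenization_apply, mul_one]

end Homogenization

section SLemma

variable {V : Type*} [AddCommGroup V] [Module ℝ V]

theorem quadraticForm_mul_le_mul_of_neg_of_pos {Q₁ Q₂ : QuadraticForm ℝ V}
    (himp : ∀ z, Q₁ z ≤ 0 → Q₂ z ≤ 0) {u v : V} (hu : Q₁ u < 0) (hv : 0 < Q₁ v) :
    Q₁ v * Q₂ u ≤ Q₁ u * Q₂ v := by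
  obtain ⟨r, hr, s, hs, hr_root, hs_root, hrs⟩ := exists_neg_root_pos_root hv hu (polar Q₁ u v)
  have hQ₂_of_root {t : ℝ} (ht : Q₁ v * t ^ 2 + polar Q₁ u v * t + Q₁ u = 0) :
      Q₂ v * t ^ 2 + polar Q₂ u v * t + Q₂ u ≤ 0 := by
    rw [← quadraticForm_map_add_smul] at ht ⊢
    exact himp _ ht.le
  have hweighted : (s - r) * (Q₂ u - r * s * Q₂ v) ≤ 0 :=
    calc (s - r) * (Q₂ u - r * s * Q₂ v)
      _ = s * (Q₂ v * r ^ 2 + polar Q₂ u v * r + Q₂ u)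
          + -r * (Q₂ v * s ^ 2 + polar Q₂ u v * s + Q₂ u) := by ring
      _ ≤ 0 := add_nonpos
          (mul_nonpos_of_nonneg_of_nonpos hs.le (hQ₂_of_root hr_root))
          (mul_nonpos_of_nonneg_of_nonpos (neg_nonneg.mpr hr.le) (hQ₂_of_root hs_root))
  have hle : Q₂ u ≤ r * s * Q₂ v :=
    sub_nonpos.mp (nonpos_of_mul_nonpos_right hweighted (sub_pos.mpr (hr.trans hs)))
  calc Q₁ v * Q₂ u ≤ Q₁ v * (r * s * Q₂ v) := mul_le_mul_of_nonneg_left hle hv.le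
    _ = Q₁ u * Q₂ v := by rw [← hrs]; ring

theorem exists_nonneg_forall_quadraticForm_le_mul {Q₁ Q₂ : QuadraticForm ℝ V}
    (hslater : ∃ z, Q₁ z < 0) (himp : ∀ z, Q₁ z ≤ 0 → Q₂ z ≤ 0) :
    ∃ c : ℝ, 0 ≤ c ∧ ∀ z, Q₂ z ≤ c * Q₁ z := by
  let ratio (z : V) : ℝ := Q₂ z / Q₁ z
  have hseparated : ∀ a ∈ insert 0 (ratio '' {v | 0 < Q₁ v}), ∀ b ∈ ratio '' {u | Q₁ u < 0},
      a ≤ b := by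
    rintro a (rfl | ⟨v, hv, rfl⟩) b ⟨u, hu, rfl⟩
    · exact div_nonneg_of_nonpos (himp u hu.le) hu.le
    · rw [div_le_iff₀ hv, div_mul_eq_mul_div, le_div_iff_of_neg hu]
      linarith [quadraticForm_mul_le_mul_of_neg_of_pos himp hu hv]
  obtain ⟨c, hc_upper, hc_lower⟩ := exists_between_of_forall_le (Set.insert_nonempty _ _)
    (Set.Nonempty.image ratio hslater) hseparated
  refine ⟨c, hc_upper (Set.mem_insert _ _), fun z => ?_⟩
  rcases lt_trichotomy (Q₁ z) 0 with hneg | hzero | hpos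
  · exact (le_div_iff_of_neg hneg).mp (hc_lower ⟨z, hneg, rfl⟩)
  · simpa only [hzero, mul_zero] using himp z hzero.le
  · exact (div_le_iff₀ hpos).mp (hc_upper (Set.mem_insert_of_mem _ ⟨z, hpos, rfl⟩))

theorem quadraticForm_nonpos_imp_nonpos_iff {Q₁ Q₂ : QuadraticForm ℝ V} (hslater : ∃ z, Q₁ z < 0) :
    (∀ z, Q₁ z ≤ 0 → Q₂ z ≤ 0) ↔ ∃ c : ℝ, 0 ≤ c ∧ ∀ z, Q₂ z ≤ c * Q₁ z :=
  ⟨exists_nonneg_forall_quadraticForm_le_mul hslater, fun ⟨_, hc, hle⟩ z hz =>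
    (hle z).trans (mul_nonpos_of_nonneg_of_nonpos hc hz)⟩

theorem quadraticForm_nonpos_of_forall_pos_add_smul {Q : QuadraticForm ℝ V} {z w : V}
    (h : ∀ t : ℝ, 0 < t → Q (z + t • w) ≤ 0) : Q z ≤ 0 := by
  have hcont : Continuous fun t : ℝ => Q (z + t • w) := by
    simp only [quadraticForm_map_add_smul]
    fun_prop
  have hlim : Tendsto (fun t : ℝ => Q (z + t • w)) (𝓝[>] 0) (𝓝 (Q z)) := by
    simpa using (hcont.tendsto 0).mono_left nhdsWithin_le_nhds
  exact le_of_tendsto hlim (eventually_mem_nhdsWithin.mono h)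

theorem quadraticForm_nonpos_of_forall_apply_ne_zero {Q₁ Q₂ : QuadraticForm ℝ V}
    {φ : V →ₗ[ℝ] ℝ} {u : V} (hu : Q₁ u < 0) (hφu : φ u ≠ 0)
    (himp : ∀ z, φ z ≠ 0 → Q₁ z ≤ 0 → Q₂ z ≤ 0) {z : V} (hz : Q₁ z ≤ 0) : Q₂ z ≤ 0 := by
  by_cases hφz : φ z = 0
  · obtain ⟨w, hw, hφw, hpolar⟩ : ∃ w, Q₁ w < 0 ∧ φ w ≠ 0 ∧ polar Q₁ z w ≤ 0 := by
      rcases le_total (polar Q₁ z u) 0 with hle | hge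
      · exact ⟨u, hu, hφu, hle⟩
      · exact ⟨-u, by rwa [QuadraticMap.map_neg], by rwa [map_neg, neg_ne_zero],
          by rwa [polar_neg_right, neg_nonpos]⟩
    refine quadraticForm_nonpos_of_forall_pos_add_smul (w := w) fun t ht => himp _ ?_ ?_
    · simpa [hφz] using ⟨ht.ne', hφw⟩
    · rw [quadraticForm_map_add_smul]
      exact add_nonpos (add_nonpos (mul_nonpos_of_nonpos_of_nonneg hw.le (sq_nonneg t))
        (mul_nonpos_of_nonpos_of_nonneg hpolar ht.le)) hz
  · exact himp z hφz hz

theorem forall_quadraticHomogenization_nonpos_imp_iff {Q₁ Q₂ : QuadraticForm ℝ V}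
    {l₁ l₂ : V →ₗ[ℝ] ℝ} {h₁ h₂ : ℝ} (hslater : ∃ x, Q₁ x + 2 * l₁ x + h₁ < 0) :
    (∀ z, quadraticHomogenization Q₁ l₁ h₁ z ≤ 0 → quadraticHomogenization Q₂ l₂ h₂ z ≤ 0) ↔
      ∀ x, Q₁ x + 2 * l₁ x + h₁ ≤ 0 → Q₂ x + 2 * l₂ x + h₂ ≤ 0 := by
  simp only [← quadraticHomogenization_apply_one] at hslater ⊢
  refine ⟨fun himp x => himp (x, 1), fun himp z => ?_⟩
  obtain ⟨x₀, hx₀⟩ := hslater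
  refine quadraticForm_nonpos_of_forall_apply_ne_zero (φ := LinearMap.snd ℝ V ℝ) hx₀ one_ne_zero ?_
  rintro ⟨x, t⟩ (ht : t ≠ 0) hz
  have hscale : (x, t) = t • (t⁻¹ • x, (1 : ℝ)) := by simp [ht]
  have ht2 : 0 < t * t := mul_self_pos.mpr ht
  rw [hscale, QuadraticMap.map_smul, smul_eq_mul] at hz ⊢
  exact mul_nonpos_of_nonneg_of_nonpos ht2.le (himp _ (nonpos_of_mul_nonpos_right hz ht2))

theorem stmt_7_general (Q₁ Q₂ : QuadraticForm ℝ V) (l₁ l₂ : V →ₗ[ℝ] ℝ) (h₁ h₂ : ℝ)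
    (hslater : ∃ x, Q₁ x + 2 * l₁ x + h₁ < 0) :
    (∀ x, Q₁ x + 2 * l₁ x + h₁ ≤ 0 → Q₂ x + 2 * l₂ x + h₂ ≤ 0) ↔
      ∃ c : ℝ, 0 ≤ c ∧ ∀ z,
        quadraticHomogenization Q₂ l₂ h₂ z ≤ c * quadraticHomogenization Q₁ l₁ h₁ z := by
  rw [← forall_quadraticHomogenization_nonpos_imp_iff hslater]
  apply quadraticForm_nonpos_imp_nonpos_iff
  simp only [← quadraticHomogenization_apply_one] at hslater
  exact hslater.imp' (·, 1) fun _ => id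

end SLemma

section QuadBlock

variable {N : ℕ}

theorem quadBlock_isSymm {F : Matrix (Fin N) (Fin N) ℝ} (hF : F.IsSymm) (g : Fin N → ℝ) (h : ℝ) :
    (quadBlock N F g h).IsSymm :=
  hF.fromBlocks rfl rfl

theorem dotProduct_quadBlock_mulVec (F : Matrix (Fin N) (Fin N) ℝ) (g : Fin N → ℝ) (h : ℝ)
    (x : Fin N → ℝ) (t : ℝ) :
    Sum.elim x (fun _ => t) ⬝ᵥ quadBlock N F g h *ᵥ Sum.elim x (fun _ => t) =
      quadraticHomogenization F.toQuadraticForm' (dotProductBilin ℝ ℝ g) h (x, t) := by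
  have hcol : (of fun i (_ : Unit) => g i) *ᵥ (fun _ => t) = t • g := by
    ext i
    simp [mulVec, dotProduct, mul_comm]
  have hrow : (of fun (_ : Unit) j => g j) *ᵥ x = fun _ => g ⬝ᵥ x := rfl
  have hcorner : (of fun (_ _ : Unit) => h) *ᵥ (fun _ => t) = fun _ => h * t := by
    ext
    simp [mulVec, dotProduct]
  rw [quadBlock, fromBlocks_mulVec, Sum.elim_comp_inl, Sum.elim_comp_inr, hcol, hrow, hcorner,
    sumElim_dotProduct_sumElim, quadraticHomogenization_apply, toQuadraticForm'_apply,
    dotProduct_add, dotProduct_smul, dotProduct_comm x g]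
  simp only [dotProduct, smul_eq_mul, Finset.univ_unique, PUnit.default_eq_unit, Pi.add_apply,
    Finset.sum_const, Finset.card_singleton, one_smul, dotProductBilin_apply_apply]
  ring

theorem posSemidef_smul_quadBlock_sub_quadBlock_iff {F₁ F₂ : Matrix (Fin N) (Fin N) ℝ}
    (hF₁ : F₁.IsSymm) (hF₂ : F₂.IsSymm) (g₁ g₂ : Fin N → ℝ) (h₁ h₂ c : ℝ) :
    (c • quadBlock N F₁ g₁ h₁ - quadBlock N F₂ g₂ h₂).PosSemidef ↔
      ∀ z, quadraticHomogenization F₂.toQuadraticForm' (dotProductBilin ℝ ℝ g₂) h₂ z ≤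
        c * quadraticHomogenization F₁.toQuadraticForm' (dotProductBilin ℝ ℝ g₁) h₁ z := by
  have hsymm : (c • quadBlock N F₁ g₁ h₁ - quadBlock N F₂ g₂ h₂).IsHermitian :=
    isHermitian_iff_isSymm.mpr
      (((quadBlock_isSymm hF₁ g₁ h₁).smul c).sub (quadBlock_isSymm hF₂ g₂ h₂))
  have heval (x : Fin N → ℝ) (t : ℝ) :
      Sum.elim x (fun _ => t) ⬝ᵥ (c • quadBlock N F₁ g₁ h₁ - quadBlock N F₂ g₂ h₂) *ᵥ
          Sum.elim x (fun _ => t) =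
        c * quadraticHomogenization F₁.toQuadraticForm' (dotProductBilin ℝ ℝ g₁) h₁ (x, t) -
          quadraticHomogenization F₂.toQuadraticForm' (dotProductBilin ℝ ℝ g₂) h₂ (x, t) := by
    rw [sub_mulVec, smul_mulVec, dotProduct_sub, dotProduct_smul, smul_eq_mul,
      dotProduct_quadBlock_mulVec, dotProduct_quadBlock_mulVec]
  simp only [posSemidef_iff_dotProduct_mulVec, hsymm, true_and, star_trivial]
  constructor
  · rintro hnonneg ⟨x, t⟩
    exact sub_nonneg.mp (heval x t ▸ hnonneg _)
  · intro hle y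
    have hy : y = Sum.elim (y ∘ Sum.inl) fun _ => y (Sum.inr ()) :=
      (Sum.elim_comp_inl_inr y).symm
    rw [hy, heval]
    exact sub_nonneg.mpr (hle _)

end QuadBlock

/-- S-procedure (S-lemma): under strict feasibility of the first quadratic inequality,
the implication between the two quadratic inequalities holds iff there exists `λ ≥ 0`
such that `λ·[[F1, g1], [g1ᵀ, h1]] − [[F2, g2], [g2ᵀ, h2]]` is positive semidefinite. -/
theorem stmt_7 (N : ℕ) (F1 F2 : Matrix (Fin N) (Fin N) ℝ)
    (hF1 : F1.IsSymm) (hF2 : F2.IsSymm)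
    (g1 g2 : Fin N → ℝ) (h1 h2 : ℝ)
    (hslater : ∃ x : Fin N → ℝ, x ⬝ᵥ F1 *ᵥ x + 2 * (g1 ⬝ᵥ x) + h1 < 0) :
    (∀ x : Fin N → ℝ,
        x ⬝ᵥ F1 *ᵥ x + 2 * (g1 ⬝ᵥ x) + h1 ≤ 0 →
        x ⬝ᵥ F2 *ᵥ x + 2 * (g2 ⬝ᵥ x) + h2 ≤ 0) ↔
      ∃ lam : ℝ, 0 ≤ lam ∧
        (lam • quadBlock N F1 g1 h1 - quadBlock N F2 g2 h2).PosSemidef := by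
  simp only [posSemidef_smul_quadBlock_sub_quadBlock_iff hF1 hF2, ← toQuadraticForm'_apply]
    at hslater ⊢
  exact stmt_7_general _ _ (dotProductBilin ℝ ℝ g1) (dotProductBilin ℝ ℝ g2) h1 h2 hslater
end
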